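/- Let e be an admissible tableau supported on X(v_6). If S(2k) = B∪{4n−2,4n}, then S(1) = A∪{4n−1,4n+1,4n+2}; in particular the first and last rows together form the pattern X_1. -/

import Mathlib

/-!
Write `N = 4n+2`. By (R3) a row has `N` distinct entries, at most one from each of the `N` pairs
`{t, 2N+1-t}`, hence exactly one (`row_meets_pair`). Together with (R5), every `t ≤ N` lies in
exactly `k` of the `2k` rows (`card_rowsWith`).

The columns are then determined one by one (`columns_forced`): for `j ≤ 2n`, column `j` is `2j-1` in
rows `1, …, k` and `2j` in rows `k+1, …, 2k`. Suppose this holds up to column `m` and all entries of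
column `m+1` are at least `2m+1`. Then `2m+1` can only occur in column `m+1`; as it is the smallest
possible value there, it fills the top `k` rows (`odd_prefix`). The other rows have an entry
`≥ 2m+2` in this column, and the last row, which contains `2m+2`, forces equality. So `2m+2` is
already used `k` times and does not occur in the top rows, which makes column `m+2` at least `2m+3`.

The same step with `m = 2n` puts `4n+1` into the first row. That row now has `2n+1` entries
`≤ 4n+1`, so the parity condition (R4) forces it to contain `4n+2` too.
-/

/-- The "small set" `S(i) = { e(i,j) : 1 ≤ j ≤ 4n+2, e(i,j) ≤ 4n+2 }` of row `i`. -/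
def smallSet (n : ℕ) (e : ℕ → ℕ → ℕ) (i : ℕ) : Finset ℕ :=
  ((Finset.Icc 1 (4*n+2)).filter (fun j => e i j ≤ 4*n+2)).image (e i)

/-- `A = {1,3,5,…,4n-3}`, the odd integers `≤ 4n-3`. -/
def setA (n : ℕ) : Finset ℕ := (Finset.Icc 1 (4*n-3)).filter (fun t => ¬ 2 ∣ t)

/-- `B = {2,4,…,4n-4}`, the even integers `≤ 4n-4`. -/
def setB (n : ℕ) : Finset ℕ := (Finset.Icc 1 (4*n-4)).filter (fun t => 2 ∣ t)

/-- An admissible tableau: `e i j ∈ {1,…,8n+4}` for `1 ≤ i ≤ 2k`, `1 ≤ j ≤ 4n+2`,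
subject to the conditions (R1)–(R5). -/
structure IsAdmissible (n k : ℕ) (e : ℕ → ℕ → ℕ) : Prop where
  mem_range : ∀ i j, 1 ≤ i → i ≤ 2*k → 1 ≤ j → j ≤ 4*n+2 → 1 ≤ e i j ∧ e i j ≤ 8*n+4
  /-- (R1) rows strictly increase -/
  row_strict : ∀ i j, 1 ≤ i → i ≤ 2*k → 1 ≤ j → j < 4*n+2 → e i j < e i (j+1)
  /-- (R2) columns are nondecreasing -/
  col_mono : ∀ i j, 1 ≤ i → i < 2*k → 1 ≤ j → j ≤ 4*n+2 → e i j ≤ e (i+1) j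
  /-- (R3) no row contains both `t` and `8n+5-t` -/
  no_pair : ∀ i j j', 1 ≤ i → i ≤ 2*k → 1 ≤ j → j ≤ 4*n+2 → 1 ≤ j' → j' ≤ 4*n+2 →
    e i j + e i j' ≠ 8*n+5
  /-- (R4) each row has an even number of entries `> 4n+2` -/
  even_big : ∀ i, 1 ≤ i → i ≤ 2*k →
    Even (((Finset.Icc 1 (4*n+2)).filter (fun j => 4*n+2 < e i j)).card)
  /-- (R5) `t` and `8n+5-t` occur equally often in the tableau -/
  balanced : ∀ t, 1 ≤ t → t ≤ 8*n+4 →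
    (((Finset.Icc 1 (2*k)) ×ˢ (Finset.Icc 1 (4*n+2))).filter
      (fun p => e p.1 p.2 = t)).card =
    (((Finset.Icc 1 (2*k)) ×ˢ (Finset.Icc 1 (4*n+2))).filter
      (fun p => e p.1 p.2 = 8*n+5-t)).card

/-- The first `4n+2` entries of the one-line notation of `v₆`. -/
def bnd (n : ℕ) (j : ℕ) : ℕ :=
  if j ≤ 2*n-2 then 2*j
  else if j = 2*n-1 then 4*n-1
  else if j = 2*n then 4*n+2
  else if j = 2*n+1 then 4*n+4
  else if j = 2*n+2 then 4*n+5
  else if j = 2*n+3 then 4*n+7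
  else 2*j

/-- The tableau is supported on the Schubert variety `X(v₆)`. -/
def SupportedOnXv6 (n k : ℕ) (e : ℕ → ℕ → ℕ) : Prop :=
  ∀ j, 1 ≤ j → j ≤ 4*n+2 → e (2*k) j ≤ bnd n j

/-- The rows, among `1, …, 2k`, that contain the value `t`. -/
def rowsWith (n k : ℕ) (e : ℕ → ℕ → ℕ) (t : ℕ) : Finset ℕ :=
  (Finset.Icc 1 (2*k)).filter (fun i => t ∈ (Finset.Icc 1 (4*n+2)).image (e i))

theorem mem_rowsWith {n k : ℕ} {e : ℕ → ℕ → ℕ} {t i : ℕ} :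
    i ∈ rowsWith n k e t ↔
      (1 ≤ i ∧ i ≤ 2*k) ∧ ∃ j, (1 ≤ j ∧ j ≤ 4*n+2) ∧ e i j = t := by
  simp [rowsWith]

section
variable {n k : ℕ} {e : ℕ → ℕ → ℕ}

theorem row_lt (he : IsAdmissible n k e) {i : ℕ} (hi : 1 ≤ i) (hi' : i ≤ 2*k)
    {j j' : ℕ} (hj : 1 ≤ j) (hjj : j < j') (hj' : j' ≤ 4*n+2) : e i j < e i j' := by
  induction j', hjj using Nat.le_induction with
  | base => exact he.row_strict i j hi hi' hj (by omega)
  | succ m hm ih =>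
    have h1 := ih (by omega)
    have h2 := he.row_strict i m hi hi' (by omega) (by omega)
    omega

theorem row_le (he : IsAdmissible n k e) {i : ℕ} (hi : 1 ≤ i) (hi' : i ≤ 2*k)
    {j j' : ℕ} (hj : 1 ≤ j) (hjj : j ≤ j') (hj' : j' ≤ 4*n+2) : e i j ≤ e i j' := by
  rcases hjj.eq_or_lt with rfl | h
  · exact le_rfl
  · exact (row_lt he hi hi' hj h hj').le

theorem row_inj (he : IsAdmissible n k e) {i : ℕ} (hi : 1 ≤ i) (hi' : i ≤ 2*k)
    {j j' : ℕ} (hj : 1 ≤ j) (hj2 : j ≤ 4*n+2) (hj' : 1 ≤ j') (hj2' : j' ≤ 4*n+2)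
    (h : e i j = e i j') : j = j' := by
  rcases lt_trichotomy j j' with hlt | rfl | hlt
  · have := row_lt he hi hi' hj hlt hj2'; omega
  · rfl
  · have := row_lt he hi hi' hj' hlt hj2; omega

theorem col_le (he : IsAdmissible n k e) {j : ℕ} (hj : 1 ≤ j) (hj' : j ≤ 4*n+2)
    {i i' : ℕ} (hi : 1 ≤ i) (hii : i ≤ i') (hi' : i' ≤ 2*k) : e i j ≤ e i' j := by
  induction i', hii using Nat.le_induction with
  | base => exact le_rfl
  | succ m hm ih =>
    exact (ih (by omega)).trans (he.col_mono m j (by omega) (by omega) hj hj')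

/-- Each row contains `t` or `8n+5-t`: folding the entries by `x ↦ min x (8n+5-x)` maps the
`4n+2` columns injectively, hence bijectively, to `{1, …, 4n+2}`. -/
theorem row_meets_pair (he : IsAdmissible n k e) {i : ℕ} (hi : 1 ≤ i) (hi' : i ≤ 2*k)
    {t : ℕ} (ht : 1 ≤ t) (ht' : t ≤ 4*n+2) :
    ∃ j, (1 ≤ j ∧ j ≤ 4*n+2) ∧ (e i j = t ∨ e i j = 8*n+5-t) := by
  have hinj : Set.InjOn (fun j => min (e i j) (8*n+5 - e i j)) (Finset.Icc 1 (4*n+2)) := by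
    intro a ha b hb hab
    simp only [Finset.coe_Icc, Set.mem_Icc] at ha hb hab
    have h1 := he.mem_range i a hi hi' ha.1 ha.2
    have h2 := he.mem_range i b hi hi' hb.1 hb.2
    have h3 := he.no_pair i a b hi hi' ha.1 ha.2 hb.1 hb.2
    exact row_inj he hi hi' ha.1 ha.2 hb.1 hb.2 (by omega)
  have hsub : (Finset.Icc 1 (4*n+2)).image (fun j => min (e i j) (8*n+5 - e i j))
      ⊆ Finset.Icc 1 (4*n+2) := by
    intro x hx
    simp only [Finset.mem_image, Finset.mem_Icc] at hx ⊢
    obtain ⟨j, hj, rfl⟩ := hx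
    have h1 := he.mem_range i j hi hi' hj.1 hj.2
    omega
  have heq := Finset.eq_of_subset_of_card_le hsub (Finset.card_image_of_injOn hinj).ge
  have hmem : t ∈ Finset.Icc 1 (4*n+2) := Finset.mem_Icc.2 ⟨ht, ht'⟩
  rw [← heq] at hmem
  simp only [Finset.mem_image, Finset.mem_Icc] at hmem
  obtain ⟨j, hj, hjt⟩ := hmem
  have h1 := he.mem_range i j hi hi' hj.1 hj.2
  exact ⟨j, hj, by omega⟩

/-- A value occurs at most once per row, so its occurrences are counted by the rows it meets. -/
theorem card_occurrences (he : IsAdmissible n k e) (t : ℕ) :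
    (((Finset.Icc 1 (2*k)) ×ˢ (Finset.Icc 1 (4*n+2))).filter
      (fun p => e p.1 p.2 = t)).card = (rowsWith n k e t).card := by
  have himg : (((Finset.Icc 1 (2*k)) ×ˢ (Finset.Icc 1 (4*n+2))).filter
      (fun p => e p.1 p.2 = t)).image Prod.fst = rowsWith n k e t := by
    ext i
    simp only [Finset.mem_image, Finset.mem_filter, Finset.mem_product, Finset.mem_Icc,
      mem_rowsWith, Prod.exists]
    constructor
    · rintro ⟨a, b, ⟨⟨ha, hb⟩, h⟩, rfl⟩
      exact ⟨ha, b, hb, h⟩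
    · rintro ⟨hi, j, hj, h⟩
      exact ⟨i, j, ⟨⟨hi, hj⟩, h⟩, rfl⟩
  rw [← himg, Finset.card_image_of_injOn]
  rintro ⟨a, b⟩ hab ⟨c, d⟩ hcd hac
  simp only [Finset.coe_filter, Finset.mem_product, Finset.mem_Icc, Set.mem_ofPred_eq] at hab hcd hac
  subst hac
  rw [row_inj he hab.1.1.1 hab.1.1.2 hab.1.2.1 hab.1.2.2 hcd.1.2.1 hcd.1.2.2
    (hab.2.trans hcd.2.symm)]

theorem card_rowsWith (he : IsAdmissible n k e) {t : ℕ} (ht : 1 ≤ t) (ht' : t ≤ 4*n+2) :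
    (rowsWith n k e t).card = k := by
  have hbal := he.balanced t ht (by omega)
  rw [card_occurrences he, card_occurrences he] at hbal
  have hdisj : Disjoint (rowsWith n k e t) (rowsWith n k e (8*n+5-t)) := by
    rw [Finset.disjoint_left]
    intro i h1 h2
    obtain ⟨hi, j, hj, hjt⟩ := mem_rowsWith.1 h1
    obtain ⟨-, j', hj', hjt'⟩ := mem_rowsWith.1 h2
    exact he.no_pair i j j' hi.1 hi.2 hj.1 hj.2 hj'.1 hj'.2 (by omega)
  have hunion : rowsWith n k e t ∪ rowsWith n k e (8*n+5-t) = Finset.Icc 1 (2*k) := by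
    ext i
    rw [Finset.mem_union, mem_rowsWith, mem_rowsWith, Finset.mem_Icc]
    constructor
    · rintro (h | h) <;> exact h.1
    · intro hi
      obtain ⟨j, hj, h | h⟩ := row_meets_pair he hi.1 hi.2 ht ht'
      · exact Or.inl ⟨hi, j, hj, h⟩
      · exact Or.inr ⟨hi, j, hj, h⟩
  have hc := Finset.card_union_of_disjoint hdisj
  rw [hunion, Nat.card_Icc] at hc
  omega

/-- If the first `m` columns have entries at most `2m` and column `m+1` has entries at least
`2m+1`, then the value `2m+1` fills column `m+1` in exactly the rows `1, …, k`. -/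
theorem odd_prefix (he : IsAdmissible n k e) {m : ℕ} (hm : m ≤ 2*n)
    (hlow : ∀ i j, 1 ≤ i → i ≤ 2*k → 1 ≤ j → j ≤ m → e i j ≤ 2*m)
    (hnext : ∀ i, 1 ≤ i → i ≤ 2*k → 2*m+1 ≤ e i (m+1)) {i : ℕ} (hi : 1 ≤ i) (hi' : i ≤ 2*k) :
    e i (m+1) = 2*m+1 ↔ i ≤ k := by
  have hcard := card_rowsWith he (t := 2*m+1) (by omega) (by omega)
  have hmem : ∀ i', i' ∈ rowsWith n k e (2*m+1) ↔ (1 ≤ i' ∧ i' ≤ 2*k) ∧ e i' (m+1) = 2*m+1 := by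
    intro i'
    rw [mem_rowsWith]
    constructor
    · rintro ⟨h, j, hj, hjt⟩
      refine ⟨h, ?_⟩
      have h1 : m+1 ≤ j := by
        by_contra hlt
        have := hlow i' j h.1 h.2 hj.1 (by omega)
        omega
      have h2 := row_le he h.1 h.2 (by omega) h1 hj.2
      have h3 := hnext i' h.1 h.2
      omega
    · rintro ⟨h, ht⟩
      exact ⟨h, m+1, by omega, ht⟩
  constructor
  · intro h
    have hsub : Finset.Icc 1 i ⊆ rowsWith n k e (2*m+1) := by
      intro i' hi2
      rw [Finset.mem_Icc] at hi2
      have h1 := col_le he (j := m+1) (by omega) (by omega) hi2.1 hi2.2 hi'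
      have h2 := hnext i' hi2.1 (by omega)
      exact (hmem i').2 ⟨by omega, by omega⟩
    have := Finset.card_le_card hsub
    rw [Nat.card_Icc] at this
    omega
  · intro h
    by_contra hne
    have hsub : rowsWith n k e (2*m+1) ⊆ Finset.Icc 1 (i-1) := by
      intro i' hi2
      obtain ⟨h2, h3⟩ := (hmem i').1 hi2
      rw [Finset.mem_Icc]
      by_contra hcon
      have h1 := col_le he (j := m+1) (by omega) (by omega) hi (show i ≤ i' by omega) h2.2
      have h2 := hnext i hi hi'
      omega
    have := Finset.card_le_card hsub
    rw [Nat.card_Icc] at this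
    omega

/-- The first `m ≤ 2n` columns are forced, and the entries of column `m+1` are at least `2m+1`. -/
theorem columns_forced (he : IsAdmissible n k e)
    (hlast : ∀ m, 1 ≤ m → m ≤ 2*n → ∃ j, (1 ≤ j ∧ j ≤ 4*n+2) ∧ e (2*k) j = 2*m)
    (m : ℕ) (hm : m ≤ 2*n) :
    (∀ i j, 1 ≤ i → i ≤ 2*k → 1 ≤ j → j ≤ m → e i j = if i ≤ k then 2*j-1 else 2*j) ∧
    (∀ i, 1 ≤ i → i ≤ 2*k → 2*m+1 ≤ e i (m+1)) := by
  induction m with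
  | zero =>
    refine ⟨fun i j _ _ h1 h2 => by omega, fun i hi hi' => ?_⟩
    have := he.mem_range i 1 hi hi' le_rfl (by omega)
    simpa using this.1
  | succ m ih =>
    obtain ⟨ih1, ih2⟩ := ih (by omega)
    have hlow : ∀ i j, 1 ≤ i → i ≤ 2*k → 1 ≤ j → j ≤ m → e i j ≤ 2*m := by
      intro i j hi hi' hj hj'
      rw [ih1 i j hi hi' hj hj']
      split_ifs <;> omega
    have hodd := fun i hi hi' => odd_prefix he (m := m) (by omega) hlow ih2 (i := i) hi hi'
    have heven : ∀ i, k < i → i ≤ 2*k → e i (m+1) = 2*m+2 := by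
      intro i hi hi'
      have h1 := hodd i (by omega) hi'
      have h2 := ih2 i (by omega) hi'
      obtain ⟨j, hj, hjm⟩ := hlast (m+1) (by omega) hm
      have h3 : m+1 ≤ j := by
        by_contra hlt
        have := hlow (2*k) j (by omega) le_rfl hj.1 (by omega)
        omega
      have h4 := row_le he (i := 2*k) (by omega) le_rfl (by omega) h3 hj.2
      have h5 := col_le he (j := m+1) (by omega) (by omega) (show 1 ≤ i by omega) hi' le_rfl
      omega
    refine ⟨fun i j hi hi' hj hj' => ?_, fun i hi hi' => ?_⟩
    · rcases Nat.lt_or_ge m j with h | h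
      · obtain rfl : j = m+1 := by omega
        split_ifs with hik
        · have := (hodd i hi hi').2 hik
          omega
        · have := heven i (by omega) hi'
          omega
      · exact ih1 i j hi hi' hj h
    · have hlt := he.row_strict i (m+1) hi hi' (by omega) (by omega)
      have h2 := ih2 i hi hi'
      by_contra hcon
      -- Then row `i ≤ k` contains `2m+2`, whose `k` occurrences are taken by the rows `k+1, …, 2k`.
      have hik : i ≤ k := by
        by_contra hik
        have := heven i (by omega) hi'
        omega
      have hcard := card_rowsWith he (t := 2*m+2) (by omega) (by omega)
      have hsub : insert i (Finset.Icc (k+1) (2*k)) ⊆ rowsWith n k e (2*m+2) := by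
        intro i' h'
        rw [Finset.mem_insert, Finset.mem_Icc] at h'
        rw [mem_rowsWith]
        rcases h' with rfl | h'
        · exact ⟨⟨hi, hi'⟩, m+1+1, by omega, by omega⟩
        · exact ⟨by omega, m+1, by omega, heven i' (by omega) h'.2⟩
      have hc := Finset.card_le_card hsub
      rw [Finset.card_insert_of_notMem (by simp; omega), Nat.card_Icc] at hc
      omega

end

/-- case (i), `S(2k) = B ∪ {4n-2, 4n}` forces
`S(1) = A ∪ {4n-1, 4n+1, 4n+2}` (pattern `X₁`). -/
theorem stmt_5 (n k : ℕ) (hn : 1 ≤ n) (hk : 1 ≤ k) (e : ℕ → ℕ → ℕ)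
    (he : IsAdmissible n k e) (hsupp : SupportedOnXv6 n k e)
    (hlast : smallSet n e (2*k) = setB n ∪ {4*n-2, 4*n}) :
    smallSet n e 1 = setA n ∪ {4*n-1, 4*n+1, 4*n+2} := by
  have hl : ∀ m, 1 ≤ m → m ≤ 2*n → ∃ j, (1 ≤ j ∧ j ≤ 4*n+2) ∧ e (2*k) j = 2*m := by
    intro m hm hm'
    have hmem : 2*m ∈ smallSet n e (2*k) := by
      rw [hlast]
      simp only [setB, Finset.mem_union, Finset.mem_filter, Finset.mem_Icc, Finset.mem_insert,
        Finset.mem_singleton]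
      omega
    simp only [smallSet, Finset.mem_image, Finset.mem_filter, Finset.mem_Icc] at hmem
    obtain ⟨j, hj, h⟩ := hmem
    exact ⟨j, hj.1, h⟩
  obtain ⟨h1, h2⟩ := columns_forced he hl (2*n) le_rfl
  have hlow : ∀ i j, 1 ≤ i → i ≤ 2*k → 1 ≤ j → j ≤ 2*n → e i j ≤ 2*(2*n) := by
    intro i j hi hi' hj hj'
    rw [h1 i j hi hi' hj hj']
    split_ifs <;> omega
  have hmid := (odd_prefix he le_rfl hlow h2 (i := 1) le_rfl (by omega)).2 hk
  have hrow : ∀ j, 1 ≤ j → j ≤ 2*n+1 → e 1 j = 2*j-1 := by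
    intro j hj hj'
    rcases Nat.lt_or_ge (2*n) j with h | h
    · obtain rfl : j = 2*n+1 := by omega
      omega
    · rw [h1 1 j le_rfl (by omega) hj h, if_pos hk]
  have hgt : e 1 (2*n+1) < e 1 (2*n+2) :=
    he.row_strict 1 (2*n+1) le_rfl (by omega) (by omega) (by omega)
  have htop : e 1 (2*n+2) = 4*n+2 := by
    by_contra hne
    -- Otherwise the entries `> 4n+2` occupy the `2n+1` columns from `2n+2` on, an odd number.
    have hbig : (Finset.Icc 1 (4*n+2)).filter (fun j => 4*n+2 < e 1 j)
        = Finset.Icc (2*n+2) (4*n+2) := by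
      ext j
      simp only [Finset.mem_filter, Finset.mem_Icc]
      constructor
      · rintro ⟨hj, hj'⟩
        refine ⟨?_, hj.2⟩
        by_contra hlt
        have := hrow j hj.1 (by omega)
        omega
      · rintro ⟨hj, hj'⟩
        have := row_le he (i := 1) le_rfl (by omega) (by omega) hj hj'
        omega
    have hev := he.even_big 1 le_rfl (by omega)
    rw [hbig, Nat.card_Icc, Nat.even_iff] at hev
    omega
  ext x
  simp only [smallSet, setA, Finset.mem_image, Finset.mem_union, Finset.mem_filter,
    Finset.mem_Icc, Finset.mem_insert, Finset.mem_singleton]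
  constructor
  · rintro ⟨j, ⟨hj, hjs⟩, rfl⟩
    rcases Nat.lt_or_ge (2*n+1) j with h | h
    · have := row_le he (i := 1) le_rfl (by omega) (by omega) (show 2*n+2 ≤ j by omega) hj.2
      omega
    · have := hrow j hj.1 h
      omega
  · intro hx
    by_cases hx2 : x = 4*n+2
    · exact ⟨2*n+2, by omega, by omega⟩
    · have := hrow ((x+1)/2) (by omega) (by omega)
      exact ⟨(x+1)/2, by omega, by omega⟩
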